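/- Convexity of the relaxed A-optimal objective: let R : Matrix (Fin ℓ) (Fin m) ℝ and let C : Matrix (Fin ℓ) (Fin ℓ) ℝ be symmetric positive semidefinite. Then the map w ↦ trace((R Diag(w) Rᵀ + I_ℓ)⁻¹ C) is convex on the nonnegative orthant { w ∈ ℝ^m : w_k ≥ 0 for all k }. -/

import Mathlib

open Matrix

/-- The low-rank objective `G(w) = trace((R Diag(w) Rᵀ + I)⁻¹ C)`. -/
noncomputable def Gobj {ℓ m : ℕ} (R : Matrix (Fin ℓ) (Fin m) ℝ)
    (C : Matrix (Fin ℓ) (Fin ℓ) ℝ) (w : Fin m → ℝ) : ℝ :=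
  Matrix.trace ((R * Matrix.diagonal w * Rᵀ + 1)⁻¹ * C)

lemma aux_posDef {ℓ m : ℕ} (R : Matrix (Fin ℓ) (Fin m) ℝ) (w : Fin m → ℝ)
    (hw : ∀ k, 0 ≤ w k) : (R * Matrix.diagonal w * Rᵀ + 1).PosDef := by
  have h1 : (Matrix.diagonal w).PosSemidef := Matrix.PosSemidef.diagonal hw
  have h2 := h1.mul_mul_conjTranspose_same R
  rw [Matrix.conjTranspose_eq_transpose_of_trivial] at h2
  exact Matrix.PosDef.posSemidef_add h2 Matrix.PosDef.one

lemma aux_tangent {ℓ : ℕ} (M Z C : Matrix (Fin ℓ) (Fin ℓ) ℝ) (hM : M.PosDef)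
    (hZ : Z.IsHermitian) (hC : C.PosSemidef) :
    2 * (Z * C).trace - (Z * M * Z * C).trace ≤ (M⁻¹ * C).trace := by
  obtain ⟨B, rfl⟩ : ∃ B : Matrix (Fin ℓ) (Fin ℓ) ℝ, C = Bᴴ * B := by
    open scoped MatrixOrder ComplexOrder in
    exact CStarAlgebra.nonneg_iff_eq_star_mul_self.mp hC.nonneg
  have hdet : IsUnit M.det := (Matrix.isUnit_iff_isUnit_det M).mp hM.isUnit
  have hD : (M⁻¹ - Z)ᴴ = M⁻¹ - Z := (hM.isHermitian.inv.sub hZ)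
  have h1 := hM.posSemidef.mul_mul_conjTranspose_same (M⁻¹ - Z)
  rw [hD] at h1
  have h2 := (h1.mul_mul_conjTranspose_same B).trace_nonneg
  have e : (M⁻¹ - Z) * M * (M⁻¹ - Z) = M⁻¹ - Z - Z + Z * M * Z := by
    rw [sub_mul, Matrix.nonsing_inv_mul _ hdet, sub_mul, mul_sub, mul_sub,
      Matrix.mul_nonsing_inv_cancel_right _ _ hdet, one_mul, one_mul]
    abel
  rw [Matrix.trace_mul_comm, ← mul_assoc, Matrix.trace_mul_comm, e, add_mul, sub_mul, sub_mul,
    Matrix.trace_add, Matrix.trace_sub, Matrix.trace_sub] at h2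
  linarith

theorem stmt_11 {ℓ m : ℕ} (R : Matrix (Fin ℓ) (Fin m) ℝ)
    (C : Matrix (Fin ℓ) (Fin ℓ) ℝ) (hC : C.PosSemidef) :
    ConvexOn ℝ {w : Fin m → ℝ | ∀ k, 0 ≤ w k} (Gobj R C) := by
  have hconv : Convex ℝ {w : Fin m → ℝ | ∀ k, 0 ≤ w k} := by
    intro x hx y hy a b ha hb _ k
    have := mul_nonneg ha (hx k)
    have := mul_nonneg hb (hy k)
    simp only [Pi.add_apply, Pi.smul_apply, smul_eq_mul]
    linarith
  refine ⟨hconv, ?_⟩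
  intro x hx y hy a b ha hb hab
  have hN := aux_posDef R _ (hconv hx hy ha hb hab)
  have hX := aux_posDef R x hx
  have hY := aux_posDef R y hy
  have hdec : R * Matrix.diagonal (a • x + b • y) * Rᵀ + 1
      = a • (R * Matrix.diagonal x * Rᵀ + 1) + b • (R * Matrix.diagonal y * Rᵀ + 1) := by
    have : Matrix.diagonal (a • x + b • y) = a • Matrix.diagonal x + b • Matrix.diagonal y := by
      rw [← Matrix.diagonal_smul, ← Matrix.diagonal_smul, Matrix.diagonal_add]; rfl
    have h1 : (1 : Matrix (Fin ℓ) (Fin ℓ) ℝ) = a • 1 + b • 1 := by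
      rw [← add_smul, hab, one_smul]
    rw [this, Matrix.mul_add, Matrix.add_mul, smul_add, smul_add, Matrix.mul_smul, Matrix.mul_smul,
      Matrix.smul_mul, Matrix.smul_mul]
    nth_rewrite 1 [h1]
    abel
  unfold Gobj
  simp only [smul_eq_mul]
  generalize R * Matrix.diagonal (a • x + b • y) * Rᵀ + 1 = N at *
  generalize R * Matrix.diagonal x * Rᵀ + 1 = X at *
  generalize R * Matrix.diagonal y * Rᵀ + 1 = Y at *
  have hdet : IsUnit N.det := (Matrix.isUnit_iff_isUnit_det N).mp hN.isUnit
  have tX := mul_le_mul_of_nonneg_left (aux_tangent X N⁻¹ C hX hN.isHermitian.inv hC) ha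
  have tY := mul_le_mul_of_nonneg_left (aux_tangent Y N⁻¹ C hY hN.isHermitian.inv hC) hb
  have e : (N⁻¹ * C).trace = a * (N⁻¹ * X * N⁻¹ * C).trace + b * (N⁻¹ * Y * N⁻¹ * C).trace := by
    have : N⁻¹ * N * N⁻¹ * C = N⁻¹ * C := by rw [Matrix.nonsing_inv_mul _ hdet, one_mul]
    rw [← this]
    nth_rewrite 2 [hdec]
    simp only [mul_add, add_mul, Matrix.mul_smul, Matrix.smul_mul, Matrix.trace_add,
      Matrix.trace_smul, smul_eq_mul]
  have e2 : (N⁻¹ * C).trace = a * (N⁻¹ * C).trace + b * (N⁻¹ * C).trace := by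
    rw [← add_mul, hab, one_mul]
  linarith
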